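/- Let m, n, N ≥ 1 with N ≥ mn, let s ≥ 1, let R ⊆ [N] be a set of row indices with |R| = s, and let C ⊆ [m]×[n] be a set of column indices with |C| = s. Then the set of pairs (P, Q) ∈ ℝ^{N×m} × ℝ^{N×n} for which the s×s submatrix of the row-wise Khatri-Rao product P ⊙ Q with rows R and columns C is singular has Lebesgue measure zero in ℝ^{N·m + N·n}. -/

import Mathlib

/-- The row-wise Khatri-Rao product of `P : ℝ^{N×m}` and `Q : ℝ^{N×n}`. -/
def rowKhatriRao {N m n : Type*} (P : Matrix N m ℝ) (Q : Matrix N n ℝ) :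
    Matrix N (m × n) ℝ :=
  fun i jl => P i jl.1 * Q i jl.2

open MeasureTheory Polynomial

/-- A measurable set is Lebesgue null as soon as some point `x₀` is such that every line through
`x₀`, parametrised as `t ↦ x₀ + t • x`, meets the set for almost no parameter. -/
theorem measure_eq_zero_of_forall_line_null {E : Type*} [NormedAddCommGroup E] [NormedSpace ℝ E]
    [FiniteDimensional ℝ E] [MeasurableSpace E] [BorelSpace E] (μ : Measure E)
    [μ.IsAddHaarMeasure] {S : Set E} (hS : MeasurableSet S) (x₀ : E)
    (h : ∀ x : E, volume {t : ℝ | x₀ + t • x ∈ S} = 0) : μ S = 0 := by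
  have hmeas : MeasurableSet {p : E × ℝ | x₀ + p.2 • p.1 ∉ S} :=
    hS.compl.preimage
      (show Measurable fun p : E × ℝ => x₀ + p.2 • p.1 by fun_prop)
  have hlines : ∀ᵐ x ∂μ, ∀ᵐ t : ℝ, x₀ + t • x ∉ S :=
    Filter.Eventually.of_forall fun x => by
      simpa [ae_iff] using h x
  have hswap : ∀ᵐ t : ℝ, ∀ᵐ x ∂μ, x₀ + t • x ∉ S :=
    (Measure.ae_ae_comm (p := fun x t => x₀ + t • x ∉ S) hmeas).1 hlines
  obtain ⟨t, ht, ht0⟩ := (hswap.and (Measure.ae_ne volume (0 : ℝ))).exists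
  have hnull : μ ((t • ·) ⁻¹' ((x₀ + ·) ⁻¹' S)) = 0 := by
    simpa [ae_iff, Set.preimage] using ht
  rw [Measure.addHaar_preimage_smul μ ht0, measure_preimage_add, mul_eq_zero] at hnull
  refine hnull.resolve_left ?_
  simp [ht0]

/-- If a square matrix with polynomial entries has nonzero determinant at `a`, then its determinant
vanishes at only finitely many points. -/
theorem finite_setOf_det_map_eval_eq_zero {ι : Type*} [Fintype ι] [DecidableEq ι]
    {K : Type*} [CommRing K] [IsDomain K] (A : Matrix ι ι K[X]) (a : K)
    (ha : (A.map (eval a)).det ≠ 0) : {t : K | (A.map (eval t)).det = 0}.Finite := by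
  have heval (t : K) : (A.map (eval t)).det = A.det.eval t :=
    ((evalRingHom t).map_det A).symm
  simp only [heval] at ha ⊢
  exact finite_setOfPred_isRoot fun h0 => ha (by simp [h0])

/-- Rows `r i` of `P` and `Q` can be chosen as standard basis vectors so that the submatrix of
their row-wise Khatri-Rao product is the identity. -/
theorem exists_rowKhatriRao_submatrix_eq_one {ι N m n : Type*} [DecidableEq ι] [DecidableEq m]
    [DecidableEq n] {r : ι → N} (hr : Function.Injective r) {c : ι → m × n}
    (hc : Function.Injective c) :
    ∃ (P : N → m → ℝ) (Q : N → n → ℝ),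
      (rowKhatriRao (Matrix.of P) (Matrix.of Q)).submatrix r c = 1 := by
  refine ⟨Function.extend r (fun i => Pi.single (c i).1 1) 0,
    Function.extend r (fun i => Pi.single (c i).2 1) 0, ?_⟩
  ext i k
  simp only [Matrix.submatrix_apply, rowKhatriRao, Matrix.of_apply, hr.extend_apply, Pi.single_apply,
    Matrix.one_apply, ← hc.eq_iff (a := i), Prod.ext_iff]
  grind

/-- For any choice of `s` rows `R ⊆ [N]` and `s` columns `C ⊆ [m]×[n]`
(given by injections `r : Fin s ↪ Fin N` and `c : Fin s ↪ Fin m × Fin n`),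
the set of pairs `(P, Q)` for which the `s × s` submatrix `[P ⊙ Q]_{R,C}` is
singular has Lebesgue measure zero. -/
theorem rowKhatriRao_submatrix_singular_measure_zero
    (m n N s : ℕ) (hm : 1 ≤ m) (hn : 1 ≤ n) (hN : 1 ≤ N) (hs : 1 ≤ s)
    (hNmn : m * n ≤ N)
    (r : Fin s → Fin N) (hr : Function.Injective r)
    (c : Fin s → Fin m × Fin n) (hc : Function.Injective c) :
    MeasureTheory.volume
        {pq : (Fin N → Fin m → ℝ) × (Fin N → Fin n → ℝ) |
          ¬ IsUnit
              ((rowKhatriRao (Matrix.of pq.1) (Matrix.of pq.2)).submatrix r c)}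
      = 0 := by
  obtain ⟨P, Q, hPQ⟩ := exists_rowKhatriRao_submatrix_eq_one hr hc
  simp only [Matrix.isUnit_iff_isUnit_det, isUnit_iff_ne_zero, not_not]
  have hpi (k : ℕ) : (volume : Measure (Fin N → Fin k → ℝ)).IsAddHaarMeasure :=
    Measure.pi.isAddHaarMeasure _
  have hprod : (volume : Measure ((Fin N → Fin m → ℝ) × (Fin N → Fin n → ℝ))).IsAddHaarMeasure :=
    Measure.prod.instIsAddHaarMeasure _ _
  refine measure_eq_zero_of_forall_line_null _ (measurableSet_eq_fun ?_ measurable_const)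
    (P, Q) fun x => ?_
  · refine (Continuous.matrix_det ?_).measurable
    refine continuous_matrix fun i j => ?_
    simp only [Matrix.submatrix_apply, rowKhatriRao, Matrix.of_apply]
    fun_prop
  let A : Matrix (Fin s) (Fin s) ℝ[X] := Matrix.of fun i k =>
    (C (P (r i) (c k).1) + X * C (x.1 (r i) (c k).1)) *
      (C (Q (r i) (c k).2) + X * C (x.2 (r i) (c k).2))
  have hA (t : ℝ) : A.map (eval t) = (rowKhatriRao (Matrix.of ((P, Q) + t • x).1)
      (Matrix.of ((P, Q) + t • x).2)).submatrix r c := by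
    ext i k
    simp [A, rowKhatriRao, mul_comm t]
  have hA0 : A.map (eval 0) = 1 := by
    rw [← hPQ]
    ext i k
    simp [A, rowKhatriRao]
  have hfin := finite_setOf_det_map_eval_eq_zero A 0 (by simp [hA0])
  simp only [hA] at hfin
  exact hfin.measure_zero volume
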